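/- The positive integers contained in the wild semigroup W are exactly the positive integers not divisible by 3. -/

import Mathlib

/-- Generators of the wild semigroup: 1/2 together with (3k+2)/(2k+1) for k ≥ 0. -/
def wildGens : Set ℚ := {1/2} ∪ {q : ℚ | ∃ k : ℕ, q = (3 * k + 2) / (2 * k + 1)}

def wildSemigroup : Subsemigroup ℚ := Subsemigroup.closure wildGens

/-!
The wild semigroup contains `2`, `1/2` and all `(3b + 1)/b` with `b` odd. Hence any factorization
`3xy + 1 = 2nr` expresses `n` through `x`, `y`, `1/r`, and any factorization `3ny + 1 = 2z`
expresses `1/n` through `y` and `1/z`. Simultaneous strong induction shows that every `1/n`, and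
every `n` prime to `3`, is wild: writing `n` as a linear polynomial in `t` on a residue class, one
exhibits such factorizations into linear polynomials in `t` that are smaller than `n`, or that are
themselves reduced to smaller ones by further factorizations of the same kind. Conversely, no
generator has a numerator divisible by `3`.
-/

theorem half_mem_wildSemigroup : (1 / 2 : ℚ) ∈ wildSemigroup :=
  Subsemigroup.subset_closure (Or.inl rfl)

theorem two_mem_wildSemigroup : (2 : ℚ) ∈ wildSemigroup :=
  Subsemigroup.subset_closure (Or.inr ⟨0, by norm_num⟩)

theorem one_mem_wildSemigroup : (1 : ℚ) ∈ wildSemigroup := by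
  simpa using mul_mem half_mem_wildSemigroup two_mem_wildSemigroup

theorem three_mul_add_one_div_mem_wildSemigroup {b : ℕ} (hb : Odd b) :
    ((3 * b + 1) / b : ℚ) ∈ wildSemigroup := by
  obtain ⟨k, rfl⟩ := hb
  have hgen : ((3 * k + 2) / (2 * k + 1) : ℚ) ∈ wildSemigroup :=
    Subsemigroup.subset_closure (Or.inr ⟨k, rfl⟩)
  convert mul_mem two_mem_wildSemigroup hgen using 1
  push_cast
  ring

theorem pos_of_mem_wildSemigroup {q : ℚ} (hq : q ∈ wildSemigroup) : 0 < q := by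
  induction hq using Subsemigroup.closure_induction with
  | mem x hx => rcases hx with rfl | ⟨k, rfl⟩ <;> positivity
  | mul x y _ _ hx hy => exact mul_pos hx hy

theorem not_three_dvd_num_of_mem_wildSemigroup {q : ℚ} (hq : q ∈ wildSemigroup) :
    ¬ 3 ∣ q.num := by
  induction hq using Subsemigroup.closure_induction with
  | mem x hx =>
    rcases hx with rfl | ⟨k, rfl⟩
    · norm_num
    · have hnum : ((3 * k + 2 : ℤ) / (2 * k + 1 : ℤ) : ℚ).num ∣ 3 * k + 2 := by
        rw [← Rat.divInt_eq_div]
        exact Rat.num_dvd _ (by omega)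
      push_cast at hnum
      exact fun h => absurd (h.trans hnum) (by omega)
  | mul x y _ _ hx hy =>
    have hnum : (x * y).num ∣ x.num * y.num := by
      rw [Rat.mul_num]
      exact Int.ediv_dvd_of_dvd (Int.natCast_dvd.2 (Nat.gcd_dvd_left ..))
    exact fun h => (Int.prime_three.dvd_or_dvd (h.trans hnum)).elim hx hy

/-- The natural numbers that lie in the wild semigroup. -/
def wildIntegers : Submonoid ℕ where
  carrier := {n | (n : ℚ) ∈ wildSemigroup}
  one_mem' := by simpa using one_mem_wildSemigroup
  mul_mem' ha hb := by simpa using mul_mem ha hb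

/-- The natural numbers whose reciprocal lies in the wild semigroup. Since the wild semigroup is
positive, `0` is not one of them, in spite of `0⁻¹ = 0`. -/
def wildDenominators : Submonoid ℕ where
  carrier := {n | (n : ℚ)⁻¹ ∈ wildSemigroup}
  one_mem' := by simpa using one_mem_wildSemigroup
  mul_mem' ha hb := by simpa [mul_comm] using mul_mem ha hb

theorem two_mem_wildIntegers : 2 ∈ wildIntegers := two_mem_wildSemigroup

theorem two_mem_wildDenominators : 2 ∈ wildDenominators := by
  simpa [wildDenominators] using half_mem_wildSemigroup

theorem mem_wildIntegers_of_two_mul_mul_eq {n r b : ℕ} (hr : r ∈ wildDenominators)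
    (hb : b ∈ wildIntegers) (h : 2 * (n * r) = 3 * b + 1) : n ∈ wildIntegers := by
  have hodd : Odd b := Nat.odd_iff.2 (by omega)
  have key := mul_mem (mul_mem (three_mul_add_one_div_mem_wildSemigroup hodd) hb)
    (mul_mem half_mem_wildSemigroup hr)
  have hb0 : (b : ℚ) ≠ 0 := by exact_mod_cast hodd.pos.ne'
  have hr0 : (r : ℚ) ≠ 0 := by
    rw [Nat.cast_ne_zero]
    rintro rfl
    omega
  have hq : (2 * (n * r) : ℚ) = 3 * b + 1 := by exact_mod_cast h
  change (n : ℚ) ∈ wildSemigroup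
  convert key using 1
  rw [← hq]
  field_simp

theorem mem_wildDenominators_of_two_mul_eq {n y z : ℕ} (hy : y ∈ wildIntegers)
    (hz : z ∈ wildDenominators) (h : 3 * (n * y) + 1 = 2 * z) : n ∈ wildDenominators := by
  have hodd : Odd (n * y) := Nat.odd_iff.2 (by omega)
  have key := mul_mem (mul_mem (three_mul_add_one_div_mem_wildSemigroup hodd) hy)
    (mul_mem half_mem_wildSemigroup hz)
  have hny0 : (n * y : ℚ) ≠ 0 := by exact_mod_cast hodd.pos.ne'
  have hy0 : (y : ℚ) ≠ 0 := right_ne_zero_of_mul hny0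
  have hz0 : (z : ℚ) ≠ 0 := by exact_mod_cast (by omega : z ≠ 0)
  have hq : (3 * (n * y : ℕ) + 1 : ℚ) = 2 * z := by exact_mod_cast h
  change (n : ℚ)⁻¹ ∈ wildSemigroup
  convert key using 1
  rw [hq]
  push_cast
  field_simp

/-- The equation holds when `n` and `3m` are, in either order, `2c - 1` and `2c + 1`. -/
theorem mem_wildDenominators_of_eq_four_mul_sq {n m c : ℕ} (hm : m ∈ wildIntegers)
    (hc : c ∈ wildDenominators) (h : 3 * (n * m) + 1 = 4 * c ^ 2) : n ∈ wildDenominators :=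
  mem_wildDenominators_of_two_mul_eq hm (mul_mem two_mem_wildDenominators (pow_mem hc 2))
    (by rw [h]; ring)

theorem seven_div_five_mem_wildSemigroup : (7 / 5 : ℚ) ∈ wildSemigroup := by
  have hf (b : ℕ) (hb : Odd b := by decide) := three_mul_add_one_div_mem_wildSemigroup hb
  convert mul_mem (mul_mem (mul_mem (hf 7) (hf 11)) (mul_mem (hf 17) (hf 65)))
    (pow_mem two_mem_wildDenominators 6) using 1
  norm_num

theorem five_mem_wildIntegers : 5 ∈ wildIntegers := by
  have hf (b : ℕ) (hb : Odd b := by decide) := three_mul_add_one_div_mem_wildSemigroup hb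
  change ((5 : ℕ) : ℚ) ∈ wildSemigroup
  convert mul_mem (mul_mem seven_div_five_mem_wildSemigroup
    (mul_mem (hf 7) (mul_mem (hf 55) (hf 83)))) (pow_mem two_mem_wildDenominators 3) using 1
  norm_num

theorem seven_mem_wildIntegers : 7 ∈ wildIntegers := by
  have hfive : ((5 : ℕ) : ℚ) ∈ wildSemigroup := five_mem_wildIntegers
  change ((7 : ℕ) : ℚ) ∈ wildSemigroup
  convert mul_mem hfive seven_div_five_mem_wildSemigroup using 1
  norm_num

/-- The hypothesis of the strong induction: below `N`, every reciprocal and every integer prime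
to `3` is wild. -/
def WildBelow (N : ℕ) : Prop :=
  ∀ m, 0 < m → m < N → m ∈ wildDenominators ∧ (¬ 3 ∣ m → m ∈ wildIntegers)

namespace WildBelow

variable {n : ℕ}

theorem mem_den (H : WildBelow n) (m : ℕ) (hpos : 0 < m := by omega) (hlt : m < n := by omega) :
    m ∈ wildDenominators :=
  (H m hpos hlt).1

theorem mem_int (H : WildBelow n) (m : ℕ) (h3 : ¬ 3 ∣ m := by omega) (hlt : m < n := by omega) :
    m ∈ wildIntegers :=
  (H m (by omega) hlt).2 h3

theorem self_mem_den_of_mod_four_eq_one (H : WildBelow n) (h : n % 4 = 1) :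
    n ∈ wildDenominators := by
  obtain rfl | ⟨t, rfl⟩ : n = 1 ∨ ∃ t, n = 4 * t + 5 := by
    rw [or_iff_not_imp_left]
    exact fun _ => ⟨(n - 5) / 4, by omega⟩
  · exact one_mem _
  · exact mem_wildDenominators_of_two_mul_eq (one_mem _)
      (mul_mem two_mem_wildDenominators (H.mem_den (3 * t + 4))) (by ring)

theorem self_mem_den_of_mod_four_eq_three (H : WildBelow n) (h4 : n % 4 = 3)
    (h12 : n % 12 ≠ 7) : n ∈ wildDenominators := by
  obtain ⟨t, rfl⟩ : ∃ t, n = 4 * t + 3 := ⟨n / 4, by omega⟩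
  have hz : 6 * t + 5 ∈ wildDenominators := mem_wildDenominators_of_eq_four_mul_sq
    (H.mem_int (2 * t + 1)) (H.mem_den (3 * t + 2)) (by ring)
  exact mem_wildDenominators_of_two_mul_eq (one_mem _) hz (by ring)

theorem self_mem_den_of_mod_twenty_four_eq_seven (H : WildBelow n) (h : n % 24 = 7) :
    n ∈ wildDenominators := by
  obtain ⟨t, rfl⟩ : ∃ t, n = 24 * t + 7 := ⟨n / 24, by omega⟩
  have hy : 72 * t + 19 ∈ wildIntegers := mem_wildIntegers_of_two_mul_mul_eq
    (H.mem_den (9 * t + 2)) (mul_mem (H.mem_int (18 * t + 5)) (H.mem_int (24 * t + 5))) (by ring)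
  exact mem_wildDenominators_of_eq_four_mul_sq hy
    (mul_mem two_mem_wildDenominators (H.mem_den (18 * t + 5))) (by ring)

theorem self_mem_den_of_mod_twenty_four_eq_nineteen (H : WildBelow n) (h : n % 24 = 19) :
    n ∈ wildDenominators := by
  obtain ⟨t, rfl⟩ : ∃ t, n = 24 * t + 19 := ⟨n / 24, by omega⟩
  have hz : 72 * t + 53 ∈ wildDenominators := mem_wildDenominators_of_eq_four_mul_sq
    (H.mem_int (24 * t + 17)) (mul_mem two_mem_wildDenominators (H.mem_den (18 * t + 13)))
    (by ring)
  exact mem_wildDenominators_of_two_mul_eq (H.mem_int (18 * t + 13))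
    (mul_mem (H.mem_den (9 * t + 7)) hz) (by ring)

theorem self_mem_den (H : WildBelow n) (hpos : 0 < n) : n ∈ wildDenominators := by
  obtain ⟨m, rfl⟩ | h | ⟨h4, h12⟩ | h | h :
      2 ∣ n ∨ n % 4 = 1 ∨ (n % 4 = 3 ∧ n % 12 ≠ 7) ∨ n % 24 = 7 ∨ n % 24 = 19 := by omega
  · exact mul_mem two_mem_wildDenominators (H.mem_den m)
  · exact H.self_mem_den_of_mod_four_eq_one h
  · exact H.self_mem_den_of_mod_four_eq_three h4 h12
  · exact H.self_mem_den_of_mod_twenty_four_eq_seven h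
  · exact H.self_mem_den_of_mod_twenty_four_eq_nineteen h

theorem self_mem_int_of_mod_eighteen_eq_one (H : WildBelow n) (h : n % 18 = 1) :
    n ∈ wildIntegers := by
  obtain rfl | ⟨t, rfl | rfl | rfl | rfl⟩ : n = 1 ∨ ∃ t,
      n = 72 * t + 19 ∨ n = 72 * t + 37 ∨ n = 72 * t + 55 ∨ n = 72 * t + 73 := by
    rw [or_iff_not_imp_left]
    exact fun _ => ⟨(n - 19) / 72, by omega⟩
  · exact one_mem _
  · exact mem_wildIntegers_of_two_mul_mul_eq (H.mem_den (9 * t + 2))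
      (mul_mem (H.mem_int (18 * t + 5)) (H.mem_int (24 * t + 5))) (by ring)
  · exact mem_wildIntegers_of_two_mul_mul_eq
      (mul_mem two_mem_wildDenominators (H.mem_den (45 * t + 22)))
      (mul_mem (H.mem_int (60 * t + 31)) (H.mem_int (72 * t + 35))) (by ring)
  · have hr : 90 * t + 71 ∈ wildDenominators := mem_wildDenominators_of_eq_four_mul_sq
      (H.mem_int (30 * t + 23)) (mul_mem (H.mem_den 5) (H.mem_den (9 * t + 7))) (by ring)
    have hb : 180 * t + 137 ∈ wildIntegers := mem_wildIntegers_of_two_mul_mul_eq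
      (H.mem_den (27 * t + 22))
      (mul_mem (H.mem_int (60 * t + 49)) (H.mem_int (54 * t + 41))) (by ring)
    exact mem_wildIntegers_of_two_mul_mul_eq hr (mul_mem (H.mem_int (24 * t + 19)) hb) (by ring)
  · exact mem_wildIntegers_of_two_mul_mul_eq (H.mem_den (27 * t + 26))
      (mul_mem (H.mem_int (54 * t + 55)) (H.mem_int (24 * t + 23))) (by ring)

theorem self_mem_int_of_mod_eighteen_eq_five (H : WildBelow n) (h : n % 18 = 5) :
    n ∈ wildIntegers := by
  obtain rfl | ⟨t, rfl | rfl | rfl | rfl⟩ : n = 5 ∨ ∃ t,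
      n = 72 * t + 23 ∨ n = 72 * t + 41 ∨ n = 72 * t + 59 ∨ n = 72 * t + 77 := by
    rw [or_iff_not_imp_left]
    exact fun _ => ⟨(n - 23) / 72, by omega⟩
  · exact five_mem_wildIntegers
  · have hr : 90 * t + 31 ∈ wildDenominators := mem_wildDenominators_of_eq_four_mul_sq
      (H.mem_int (30 * t + 11)) (H.mem_den (45 * t + 16)) (by ring)
    have hb : 72 * t + 25 ∈ wildIntegers := mem_wildIntegers_of_two_mul_mul_eq
      (H.mem_den (27 * t + 8))
      (mul_mem (H.mem_int (54 * t + 19)) (H.mem_int (24 * t + 7))) (by ring)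
    exact mem_wildIntegers_of_two_mul_mul_eq hr (mul_mem hb (H.mem_int (60 * t + 19))) (by ring)
  · have hb : 216 * t + 121 ∈ wildIntegers := mem_wildIntegers_of_two_mul_mul_eq
      (H.mem_den (9 * t + 5))
      (mul_mem (H.mem_int (54 * t + 31)) (H.mem_int (24 * t + 13))) (by ring)
    exact mem_wildIntegers_of_two_mul_mul_eq (H.mem_den (54 * t + 31))
      (mul_mem (H.mem_int (12 * t + 7)) hb) (by ring)
  · exact mem_wildIntegers_of_two_mul_mul_eq (H.mem_den (9 * t + 7))
      (mul_mem (H.mem_int (6 * t + 5)) (H.mem_int (72 * t + 55))) (by ring)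
  · have h₁ : 180 * t + 191 ∈ wildIntegers := mem_wildIntegers_of_two_mul_mul_eq
      (H.mem_den (9 * t + 10))
      (mul_mem (H.mem_int (60 * t + 67)) (H.mem_int (18 * t + 19))) (by ring)
    have h₂ : 270 * t + 287 ∈ wildIntegers :=
      mem_wildIntegers_of_two_mul_mul_eq (one_mem _) h₁ (by ring)
    have h₃ : 216 * t + 229 ∈ wildIntegers := mem_wildIntegers_of_two_mul_mul_eq
      (H.mem_den (45 * t + 47)) (mul_mem h₂ (H.mem_int (24 * t + 25))) (by ring)
    exact mem_wildIntegers_of_two_mul_mul_eq (H.mem_den (54 * t + 58))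
      (mul_mem (H.mem_int (12 * t + 13)) h₃) (by ring)

theorem self_mem_int_of_mod_eighteen_eq_seven (H : WildBelow n) (h : n % 18 = 7) :
    n ∈ wildIntegers := by
  by_cases h54 : n % 54 = 7
  · obtain rfl | ⟨t, rfl | rfl⟩ : n = 7 ∨ ∃ t, n = 108 * t + 61 ∨ n = 108 * t + 115 := by
      rw [or_iff_not_imp_left]
      exact fun _ => ⟨(n - 61) / 108, by omega⟩
    · exact seven_mem_wildIntegers
    · exact mem_wildIntegers_of_two_mul_mul_eq (H.mem_den (45 * t + 23))
        (mul_mem (H.mem_int (30 * t + 17)) (H.mem_int (108 * t + 55))) (by ring)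
    · have h₁ : 288 * t + 305 ∈ wildIntegers := mem_wildIntegers_of_two_mul_mul_eq
        (H.mem_den (9 * t + 10))
        (mul_mem (H.mem_int (96 * t + 107)) (H.mem_int (18 * t + 19))) (by ring)
      have h₂ : 216 * t + 229 ∈ wildIntegers :=
        mem_wildIntegers_of_two_mul_mul_eq two_mem_wildDenominators h₁ (by ring)
      exact mem_wildIntegers_of_two_mul_mul_eq
        (mul_mem two_mem_wildDenominators (H.self_mem_den (by omega)))
        (mul_mem (H.mem_int (72 * t + 77)) h₂) (by ring)
  · obtain ⟨t, rfl⟩ : ∃ t, n = 18 * t + 7 := ⟨n / 18, by omega⟩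
    have hb : 60 * t + 23 ∈ wildIntegers := mem_wildIntegers_of_two_mul_mul_eq (one_mem _)
      (mul_mem (H.mem_int 5) (H.mem_int (8 * t + 3))) (by ring)
    exact mem_wildIntegers_of_two_mul_mul_eq (H.mem_den 5) hb (by ring)

theorem self_mem_int_of_mod_eighteen_eq_thirteen (H : WildBelow n) (h : n % 18 = 13) :
    n ∈ wildIntegers := by
  by_cases h54 : n % 54 = 31
  · obtain ⟨t, rfl⟩ : ∃ t, n = 54 * t + 31 := ⟨n / 54, by omega⟩
    have h₁ : 90 * t + 49 ∈ wildIntegers := mem_wildIntegers_of_two_mul_mul_eq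
      two_mem_wildDenominators (mul_mem (H.mem_int 5) (H.mem_int (24 * t + 13))) (by ring)
    have h₂ : 180 * t + 103 ∈ wildIntegers := mem_wildIntegers_of_two_mul_mul_eq
      (H.mem_den (9 * t + 5)) (mul_mem (H.mem_int (12 * t + 7)) h₁) (by ring)
    exact mem_wildIntegers_of_two_mul_mul_eq (H.mem_den 5) h₂ (by ring)
  · obtain ⟨t, rfl⟩ : ∃ t, n = 18 * t + 13 := ⟨n / 18, by omega⟩
    have hb : 24 * t + 17 ∈ wildIntegers :=
      mem_wildIntegers_of_two_mul_mul_eq (one_mem _) (H.mem_int (16 * t + 11)) (by ring)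
    exact mem_wildIntegers_of_two_mul_mul_eq two_mem_wildDenominators hb (by ring)

theorem self_mem_int_of_mod_six_eq_five (H : WildBelow n) (h : n % 6 = 5) :
    n ∈ wildIntegers := by
  by_cases h18 : n % 18 = 5
  · exact H.self_mem_int_of_mod_eighteen_eq_five h18
  · obtain ⟨t, rfl⟩ : ∃ t, n = 6 * t + 5 := ⟨n / 6, by omega⟩
    exact mem_wildIntegers_of_two_mul_mul_eq (one_mem _) (H.mem_int (4 * t + 3)) (by ring)

theorem self_mem_int_of_mod_six_eq_one (H : WildBelow n) (h : n % 6 = 1) :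
    n ∈ wildIntegers := by
  obtain h | h | h : n % 18 = 1 ∨ n % 18 = 7 ∨ n % 18 = 13 := by omega
  · exact H.self_mem_int_of_mod_eighteen_eq_one h
  · exact H.self_mem_int_of_mod_eighteen_eq_seven h
  · exact H.self_mem_int_of_mod_eighteen_eq_thirteen h

theorem self_mem_int (H : WildBelow n) (h3 : ¬ 3 ∣ n) : n ∈ wildIntegers := by
  obtain ⟨m, rfl⟩ | h | h : 2 ∣ n ∨ n % 6 = 1 ∨ n % 6 = 5 := by omega
  · exact mul_mem two_mem_wildIntegers (H.mem_int m)
  · exact H.self_mem_int_of_mod_six_eq_one h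
  · exact H.self_mem_int_of_mod_six_eq_five h

end WildBelow

theorem wildBelow (N : ℕ) : WildBelow N := by
  induction N with
  | zero => exact fun m _ hm => absurd hm m.not_lt_zero
  | succ N ih =>
    intro m hpos hm
    obtain hlt | rfl := Nat.lt_succ_iff_lt_or_eq.1 hm
    · exact ih m hpos hlt
    · exact ⟨ih.self_mem_den hpos, ih.self_mem_int⟩

theorem wild_integers_general (q : ℚ) : q ∈ wildSemigroup ↔ 0 < q ∧ ¬ 3 ∣ q.num := by
  refine ⟨fun h => ⟨pos_of_mem_wildSemigroup h, not_three_dvd_num_of_mem_wildSemigroup h⟩, ?_⟩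
  rintro ⟨hpos, h3⟩
  obtain ⟨a, ha⟩ := Int.eq_ofNat_of_zero_le (Rat.num_pos.2 hpos).le
  have hnum : a ∈ wildIntegers := (wildBelow a).self_mem_int (by omega)
  have hden : q.den ∈ wildDenominators := (wildBelow q.den).self_mem_den q.den_pos
  rw [← Rat.num_div_den q, ha, div_eq_mul_inv]
  exact mul_mem hnum hden

theorem wild_integers (n : ℕ) (hn : 0 < n) :
    (n : ℚ) ∈ wildSemigroup ↔ ¬ (3 ∣ n) := by
  rw [wild_integers_general, Rat.num_natCast]
  exact ⟨fun h => by omega, fun h => ⟨by exact_mod_cast hn, by omega⟩⟩
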